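/- arXiv:1211.4511 — 4 statements merged into one kernel-verified Lean document; each statement's English description precedes it below -/
import Mathlib

section
/- Let α : ℝⁿ → ℝⁿ be a differentiable map (the coordinate expression of a one-form on Q = ℝⁿ) and let Ω₀ be the canonical symplectic form on ℝⁿ × ℝⁿ, Ω₀((x₁,p₁),(x₂,p₂)) = ⟨x₁,p₂⟩ − ⟨x₂,p₁⟩. For x ∈ ℝⁿ let T_x = {(v, Dα(x) v) : v ∈ ℝⁿ} ⊆ ℝⁿ × ℝⁿ be the tangent space to the graph of α (the image of the one-form) at (x, α(x)), where Dα(x) is the Fréchet derivative of α at x. Then T_x is a Lagrangian subspace of (ℝⁿ × ℝⁿ, Ω₀) if and only if Dα(x) is self-adjoint with respect to the Euclidean inner product. In particular, the image of α is a Lagrangian submanifold (all its tangent spaces are Lagrangian) if and only if Dα(x) is self-adjoint for every x, i.e. the one-form α is closed. -/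
/-- Euclidean inner product on `ℝⁿ`. -/
def dotR {n : ℕ} (a b : Fin n → ℝ) : ℝ := ∑ i, a i * b i

/-- The canonical symplectic bilinear form on `ℝⁿ × ℝⁿ`:
`Ω₀((x₁,p₁),(x₂,p₂)) = ⟨x₁,p₂⟩ − ⟨x₂,p₁⟩`. -/
def Omega0 {n : ℕ} (v w : (Fin n → ℝ) × (Fin n → ℝ)) : ℝ := dotR v.1 w.2 - dotR w.1 v.2

/-- The tangent space to the graph of a one-form `α` at `(x, α(x))`:
`T_x = {(v, Dα(x)v) : v ∈ ℝⁿ}`, as a subspace of `ℝⁿ × ℝⁿ`. -/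
noncomputable def graphTangent {n : ℕ} (α : (Fin n → ℝ) → (Fin n → ℝ)) (x : Fin n → ℝ) :
    Submodule ℝ ((Fin n → ℝ) × (Fin n → ℝ)) :=
  LinearMap.graph (fderiv ℝ α x).toLinearMap

/-- for a differentiable one-form `α` on `ℝⁿ`, the tangent space
`T_x` to the image of `α` is a Lagrangian subspace of `(ℝⁿ × ℝⁿ, Ω₀)` iff
`Dα(x)` is self-adjoint; in particular all tangent spaces are Lagrangian iff
`Dα(x)` is self-adjoint for every `x`, i.e. `α` is closed. -/
theorem graph_oneform_lagrangian_iff_selfadjoint {n : ℕ}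
    (α : (Fin n → ℝ) → (Fin n → ℝ)) (hα : Differentiable ℝ α) :
    (∀ x : Fin n → ℝ,
      ((∀ z ∈ graphTangent α x, ∀ w ∈ graphTangent α x, Omega0 z w = 0) ∧
          2 * Module.finrank ℝ ↥(graphTangent α x) =
            Module.finrank ℝ ((Fin n → ℝ) × (Fin n → ℝ))) ↔
        ∀ v w, dotR (fderiv ℝ α x v) w = dotR v (fderiv ℝ α x w)) ∧
    ((∀ x : Fin n → ℝ,
      (∀ z ∈ graphTangent α x, ∀ w ∈ graphTangent α x, Omega0 z w = 0) ∧
          2 * Module.finrank ℝ ↥(graphTangent α x) =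
            Module.finrank ℝ ((Fin n → ℝ) × (Fin n → ℝ))) ↔
      ∀ x v w, dotR (fderiv ℝ α x v) w = dotR v (fderiv ℝ α x w)) := by
  have hcomm : ∀ a b : Fin n → ℝ, dotR a b = dotR b a := fun a b => by
    unfold dotR
    exact Finset.sum_congr rfl fun i _ => mul_comm _ _
  have key : ∀ x : Fin n → ℝ,
      ((∀ z ∈ graphTangent α x, ∀ w ∈ graphTangent α x, Omega0 z w = 0) ∧
          2 * Module.finrank ℝ ↥(graphTangent α x) =
            Module.finrank ℝ ((Fin n → ℝ) × (Fin n → ℝ))) ↔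
        ∀ v w, dotR (fderiv ℝ α x v) w = dotR v (fderiv ℝ α x w) := by
    intro x
    constructor
    · rintro ⟨h, -⟩ v w
      have h1 := h (v, fderiv ℝ α x v) (by simp [graphTangent, LinearMap.mem_graph_iff])
        (w, fderiv ℝ α x w) (by simp [graphTangent, LinearMap.mem_graph_iff])
      simp only [Omega0] at h1
      rw [hcomm (fderiv ℝ α x v) w]
      linarith
    · intro h
      refine ⟨?_, ?_⟩
      · rintro ⟨v, p⟩ hz ⟨w, q⟩ hw
        simp only [graphTangent, LinearMap.mem_graph_iff, ContinuousLinearMap.coe_coe] at hz hw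
        subst hz hw
        simp only [Omega0]
        rw [hcomm w, h v w, sub_self]
      · have e : Module.finrank ℝ ↥(graphTangent α x) = n := by
          unfold graphTangent
          rw [LinearMap.graph_eq_range_prod, LinearMap.finrank_range_of_inj]
          · simp
          · intro a b hab
            exact congrArg Prod.fst hab
        rw [e, Module.finrank_prod, Module.finrank_fin_fun]
        ring
  exact ⟨key, forall_congr' key⟩
end

section
/- Let E₁ and E₂ be finite-dimensional real vector spaces, E = E₁ × E₂, and let M : E → E be a linear map. Let pr₂ : E → E₂ denote the projection onto the second factor. Then graph(M) + (E × (E₁ × {0})) = E × E (as subspaces of E × E) if and only if the composition pr₂ ∘ M : E → E₂ is surjective. (This is the linear-algebra content of the transversality condition defining a Morse family: taking M to be the Hessian of S at a critical point of S along the fibers, graph(M) is the tangent space to dS(B) and E × (E₁ × {0}) is the tangent space to the conormal bundle of the projection E₁ × E₂ → E₁.) -/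
/-- for finite-dimensional real vector spaces `E₁, E₂`,
`E = E₁ × E₂` and a linear map `M : E → E`, the transversality condition
`graph(M) + (E × (E₁ × {0})) = E × E` holds if and only if
`pr₂ ∘ M : E → E₂` is surjective. -/
theorem graph_transverse_conormal_iff_surjective
    {E₁ E₂ : Type*} [AddCommGroup E₁] [Module ℝ E₁] [AddCommGroup E₂] [Module ℝ E₂]
    [FiniteDimensional ℝ E₁] [FiniteDimensional ℝ E₂]
    (M : (E₁ × E₂) →ₗ[ℝ] (E₁ × E₂)) :
    (LinearMap.graph M ⊔
        (⊤ : Submodule ℝ (E₁ × E₂)).prod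
          ((⊤ : Submodule ℝ E₁).prod (⊥ : Submodule ℝ E₂)) = ⊤) ↔
      Function.Surjective ((LinearMap.snd ℝ E₁ E₂) ∘ₗ M) := by
  constructor
  · intro h y
    have hm : (((0 : E₁ × E₂), ((0 : E₁), y)) : (E₁ × E₂) × (E₁ × E₂)) ∈
        LinearMap.graph M ⊔ (⊤ : Submodule ℝ (E₁ × E₂)).prod
          ((⊤ : Submodule ℝ E₁).prod (⊥ : Submodule ℝ E₂)) := by
      rw [h]; exact Submodule.mem_top
    obtain ⟨a, ha, b, hb, hab⟩ := Submodule.mem_sup.1 hm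
    rw [LinearMap.mem_graph_iff] at ha
    have hb2 : b.2.2 = 0 := (Submodule.mem_bot ℝ).1 hb.2.2
    refine ⟨a.1, ?_⟩
    have h2 : a.2.2 + b.2.2 = y := congrArg (fun p => p.2.2) hab
    rw [hb2, add_zero] at h2
    rw [LinearMap.comp_apply, ← ha]
    exact h2
  · intro h
    rw [eq_top_iff]
    rintro z -
    obtain ⟨x, hx⟩ := h z.2.2
    have hx' : (M x).2 = z.2.2 := hx
    refine Submodule.mem_sup.2 ⟨(x, M x), ?_, z - (x, M x), ?_, add_sub_cancel _ _⟩
    · rw [LinearMap.mem_graph_iff]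
    · refine ⟨Submodule.mem_top, Submodule.mem_top, ?_⟩
      refine (Submodule.mem_bot ℝ).2 ?_
      change z.2.2 - (M x).2 = 0
      rw [hx', sub_self]
end

section
/- Let H : ℝⁿ × ℝⁿ × ℝᵏ → ℝ be smooth (Pontryagin's Hamiltonian in variables (q,p,u)), and let (q₀,p₀,u₀) be a point with ∂H/∂u(q₀,p₀,u₀) = 0 at which the k × k matrix ∂²H/∂u∂u is invertible. Then there exist an open neighborhood U of (q₀,p₀) in ℝ²ⁿ and a smooth map u* : U → ℝᵏ with u*(q₀,p₀) = u₀ such that ∂H/∂u(q,p,u*(q,p)) = 0 for all (q,p) ∈ U; moreover, the function H_{u*}(q,p) := H(q,p,u*(q,p)) satisfies ∂H_{u*}/∂q(q,p) = ∂H/∂q(q,p,u*(q,p)) and ∂H_{u*}/∂p(q,p) = ∂H/∂p(q,p,u*(q,p)) on U, so that the graph of dH_{u*} over U is contained in the set ℒ_H = {(q,p,P_q,P_p) : ∃u such that P_q = ∂H/∂q(q,p,u), P_p = ∂H/∂p(q,p,u), ∂H/∂u(q,p,u) = 0}. -/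
/-- The `(q,p)` space `ℝⁿ × ℝⁿ`. -/
abbrev QP (n : ℕ) := (Fin n → ℝ) × (Fin n → ℝ)

/-- The set `ℒ_H ⊆ T*T*Q` in coordinates:
`ℒ_H = {(q,p,P_q,P_p) : ∃u, P_q = ∂H/∂q(q,p,u), P_p = ∂H/∂p(q,p,u), ∂H/∂u(q,p,u) = 0}`. -/
def LH {n k : ℕ} (H : QP n × (Fin k → ℝ) → ℝ) : Set (QP n × QP n) :=
  {y | ∃ u : Fin k → ℝ,
    (∀ i, y.2.1 i = fderiv ℝ H (y.1, u) ((Pi.single i 1, 0), 0)) ∧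
    (∀ i, y.2.2 i = fderiv ℝ H (y.1, u) ((0, Pi.single i 1), 0)) ∧
    (∀ w : Fin k → ℝ, fderiv ℝ H (y.1, u) (0, w) = 0)}

open scoped Topology in
/-- Smooth implicit function on a neighbourhood. -/
theorem smooth_implicit_aux {E F G : Type*} [NormedAddCommGroup E] [NormedSpace ℝ E]
    [CompleteSpace E] [NormedAddCommGroup F] [NormedSpace ℝ F] [CompleteSpace F]
    [NormedAddCommGroup G] [NormedSpace ℝ G] [CompleteSpace G]
    (f : E × F → G) (hf : ContDiff ℝ (⊤ : ℕ∞) f) (a : E × F) (ha : f a = 0)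
    (hinv : (fderiv ℝ f a ∘L .inr ℝ E F).IsInvertible) :
    ∃ (U : Set E) (g : E → F), IsOpen U ∧ a.1 ∈ U ∧ ContDiffOn ℝ (⊤ : ℕ∞) g U ∧
      g a.1 = a.2 ∧ ∀ z ∈ U, f (z, g z) = 0 := by
  have pn : (((⊤ : ℕ∞) : WithTop ℕ∞)) ≠ 0 := by simp
  have cdf : ContDiffAt ℝ (⊤ : ℕ∞) f a := hf.contDiffAt
  let g := cdf.implicitFunction pn hinv
  have hg0 : g a.1 = a.2 := cdf.implicitFunction_apply_self pn hinv
  have hgc : ContDiffAt ℝ (⊤ : ℕ∞) g a.1 := cdf.contDiffAt_implicitFunction pn hinv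
  have hg1 : ContDiffAt ℝ 1 g a.1 := hgc.of_le (by exact_mod_cast le_top)
  have e1 : ∀ᶠ z in 𝓝 a.1, ContDiffAt ℝ 1 g z := hg1.eventually (by simp)
  have e2 : ∀ᶠ z in 𝓝 a.1, f (z, g z) = 0 := by
    have := cdf.eventually_apply_implicitFunction pn hinv
    rw [ha] at this
    exact this
  have hcont : Continuous fun y => fderiv ℝ f y ∘L ContinuousLinearMap.inr ℝ E F :=
    (hf.continuous_fderiv pn).clm_comp continuous_const
  have e3 : ∀ᶠ z in 𝓝 a.1, (fderiv ℝ f (z, g z) ∘L .inr ℝ E F).IsInvertible := by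
    have hc : ContinuousAt (fun z => fderiv ℝ f (z, g z) ∘L ContinuousLinearMap.inr ℝ E F) a.1 :=
      ContinuousAt.comp (f := fun z => (z, g z)) hcont.continuousAt
        (continuousAt_id.prodMk hgc.continuousAt)
    refine hc.eventually (p := fun T => T.IsInvertible) ?_
    simp only [hg0]
    exact ContinuousLinearEquiv.isOpen.mem_nhds hinv
  obtain ⟨U, hU, hUo, haU⟩ := eventually_nhds_iff.1 (e1.and (e2.and e3))
  refine ⟨U, g, hUo, haU, ?_, hg0, fun z hz => (hU z hz).2.1⟩
  intro z hz
  apply ContDiffAt.contDiffWithinAt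
  have cdz : ContDiffAt ℝ (⊤ : ℕ∞) f (z, g z) := hf.contDiffAt
  have hi := (hU z hz).2.2
  refine (cdz.contDiffAt_implicitFunction pn hi).congr_of_eventuallyEq ?_
  have hc : ContinuousAt (fun z => (z, g z)) z :=
    continuousAt_id.prodMk (hU z hz).1.continuousAt
  filter_upwards [hc.eventually (cdz.eventually_apply_eq_iff_implicitFunction pn hi),
    hUo.mem_nhds hz] with w hw hwU
  exact (hw.1 ((hU w hwU).2.1.trans (hU z hz).2.1.symm)).symm

/-- if `H(q,p,u)` is smooth, `∂H/∂u(q₀,p₀,u₀) = 0` and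
`∂²H/∂u∂u(q₀,p₀,u₀)` is invertible, then there is a neighborhood `U` of
`(q₀,p₀)` and a smooth `u* : U → ℝᵏ` with `u*(q₀,p₀) = u₀`,
`∂H/∂u(q,p,u*(q,p)) = 0` on `U`, the function `H_{u*}(q,p) = H(q,p,u*(q,p))`
has `∂H_{u*}/∂q = ∂H/∂q` and `∂H_{u*}/∂p = ∂H/∂p` at `(q,p,u*(q,p))`, and the
graph of `dH_{u*}` over `U` is contained in `ℒ_H`. -/
theorem regular_ocp_local_section {n k : ℕ}
    (H : QP n × (Fin k → ℝ) → ℝ) (hH : ContDiff ℝ (⊤ : ℕ∞) H)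
    (q₀ p₀ : Fin n → ℝ) (u₀ : Fin k → ℝ)
    (hcrit : ∀ w : Fin k → ℝ, fderiv ℝ H ((q₀, p₀), u₀) (0, w) = 0)
    (hinv : IsUnit (Matrix.of fun i j : Fin k =>
      fderiv ℝ (fun y => fderiv ℝ H y (0, Pi.single j 1)) ((q₀, p₀), u₀)
        (0, Pi.single i 1))) :
    ∃ (U : Set (QP n)) (ustar : QP n → (Fin k → ℝ)),
      IsOpen U ∧ (q₀, p₀) ∈ U ∧
      ContDiffOn ℝ (⊤ : ℕ∞) ustar U ∧
      ustar (q₀, p₀) = u₀ ∧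
      (∀ z ∈ U, ∀ w : Fin k → ℝ, fderiv ℝ H (z, ustar z) (0, w) = 0) ∧
      (∀ z ∈ U, ∀ v : QP n,
        fderiv ℝ (fun z' => H (z', ustar z')) z v = fderiv ℝ H (z, ustar z) (v, 0)) ∧
      (∀ z ∈ U,
        (z, ((fun i => fderiv ℝ (fun z' => H (z', ustar z')) z (Pi.single i 1, 0)),
             (fun i => fderiv ℝ (fun z' => H (z', ustar z')) z (0, Pi.single i 1))))
          ∈ LH H) := by
  have pn : (((⊤ : ℕ∞) : WithTop ℕ∞)) ≠ 0 := by simp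
  have hHd : Differentiable ℝ H := hH.differentiable pn
  have hfd : ContDiff ℝ (⊤ : ℕ∞) (fderiv ℝ H) := hH.fderiv_right (by simp)
  have hexp : ∀ (T : QP n × (Fin k → ℝ) →L[ℝ] ℝ) (w : Fin k → ℝ),
      T (0, w) = ∑ i, w i * T (0, Pi.single i 1) := by
    intro T w
    have := LinearMap.pi_apply_eq_sum_univ
      ((T ∘L ContinuousLinearMap.inr ℝ (QP n) (Fin k → ℝ)).toLinearMap) w
    simpa [← Pi.single_apply, Pi.single_comm, funext_iff, Function.comp_def] using this
  let f : QP n × (Fin k → ℝ) → (Fin k → ℝ) := fun y j => fderiv ℝ H y (0, Pi.single j 1)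
  have hfj : ∀ j, ContDiff ℝ (⊤ : ℕ∞) (fun y => fderiv ℝ H y (0, Pi.single j 1)) := fun j =>
    hfd.clm_apply contDiff_const
  have hf : ContDiff ℝ (⊤ : ℕ∞) f := contDiff_pi.2 hfj
  have hinv' : (fderiv ℝ f ((q₀, p₀), u₀) ∘L .inr ℝ (QP n) (Fin k → ℝ)).IsInvertible := by
    have hval : ∀ w, (fderiv ℝ f ((q₀, p₀), u₀) ∘L .inr ℝ (QP n) (Fin k → ℝ)) w =
        Matrix.vecMul w (Matrix.of fun i j : Fin k =>
      fderiv ℝ (fun y => fderiv ℝ H y (0, Pi.single j 1)) ((q₀, p₀), u₀)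
        (0, Pi.single i 1)) := by
      intro w
      ext j
      have h1 : fderiv ℝ f ((q₀, p₀), u₀) = ContinuousLinearMap.pi fun j =>
          fderiv ℝ (fun y => fderiv ℝ H y (0, Pi.single j 1)) ((q₀, p₀), u₀) :=
        fderiv_pi fun j => ((hfj j).differentiable pn).differentiableAt
      rw [h1]
      simp only [ContinuousLinearMap.comp_apply, ContinuousLinearMap.inr_apply,
        ContinuousLinearMap.pi_apply, Matrix.vecMul, dotProduct, Matrix.of_apply]
      exact hexp _ w
    have hinj := Matrix.vecMul_injective_iff_isUnit.2 hinv
    have hinj' : Function.Injective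
        (fderiv ℝ f ((q₀, p₀), u₀) ∘L .inr ℝ (QP n) (Fin k → ℝ)).toLinearMap := by
      intro x y hxy
      apply hinj
      have hxy' : (fderiv ℝ f ((q₀, p₀), u₀) ∘L .inr ℝ (QP n) (Fin k → ℝ)) x =
        (fderiv ℝ f ((q₀, p₀), u₀) ∘L .inr ℝ (QP n) (Fin k → ℝ)) y := hxy
      rw [hval, hval] at hxy'
      exact hxy'
    exact ⟨(LinearEquiv.ofInjectiveEndo _ hinj').toContinuousLinearEquiv, by ext x; rfl⟩
  obtain ⟨U, g, hUo, haU, hgs, hg0, hgz⟩ :=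
    smooth_implicit_aux f hf ((q₀, p₀), u₀) (by ext j; exact hcrit _) hinv'
  have hz0 : ∀ z ∈ U, ∀ w : Fin k → ℝ, fderiv ℝ H (z, g z) (0, w) = 0 := by
    intro z hz w
    rw [hexp]
    refine Finset.sum_eq_zero fun i _ => ?_
    have : fderiv ℝ H (z, g z) (0, Pi.single i 1) = 0 := congrFun (hgz z hz) i
    rw [this, mul_zero]
  have hd : ∀ z ∈ U, ∀ v : QP n,
        fderiv ℝ (fun z' => H (z', g z')) z v = fderiv ℝ H (z, g z) (v, 0) := by
    intro z hz v
    have hgd : DifferentiableAt ℝ g z :=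
      (hgs.contDiffAt (hUo.mem_nhds hz)).differentiableAt pn
    have h2 : HasFDerivAt (fun z' => H (z', g z')) _ z :=
      HasFDerivAt.comp z (f := fun z' => (z', g z')) (hHd (z, g z)).hasFDerivAt
        ((hasFDerivAt_id z).prodMk hgd.hasFDerivAt)
    rw [h2.fderiv]
    have h3 : ((v, fderiv ℝ g z v) : QP n × (Fin k → ℝ)) = (v, 0) + (0, fderiv ℝ g z v) := by simp
    change fderiv ℝ H (z, g z) (v, fderiv ℝ g z v) = _
    rw [h3, map_add, hz0 z hz, add_zero]
  exact ⟨U, g, hUo, haU, hgs, hg0, hz0, hd, fun z hz =>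
    ⟨g z, fun i => hd z hz _, fun i => hd z hz _, hz0 z hz⟩⟩
end

section
/- Let Γ : ℝⁿ × ℝᵏ → ℝⁿ and L : ℝⁿ × ℝᵏ → ℝ be differentiable, and define the Pontryagin Hamiltonian H : ℝⁿ × ℝⁿ × ℝᵏ → ℝ by H(q,p,u) = ⟨p, Γ(q,u)⟩ − L(q,u). Fix (q,u) ∈ ℝⁿ × ℝᵏ and covector components a, b ∈ ℝⁿ. Then the equations a + bᵀ(∂Γ/∂q)(q,u) = (∂L/∂q)(q,u) and bᵀ(∂Γ/∂u)(q,u) = (∂L/∂u)(q,u) hold if and only if a = −(∂H/∂q)(q,b,u) and (∂H/∂u)(q,b,u) = 0; moreover (∂H/∂p)(q,b,u) = Γ(q,u). Consequently the set ℒ_{C,L} = {(q, q̇, a, b) : ∃u with q̇ = Γ(q,u), a + bᵀ∂Γ/∂q = ∂L/∂q, bᵀ∂Γ/∂u = ∂L/∂u} coincides with {(q, q̇, a, b) : ∃u with q̇ = ∂H/∂p(q,b,u), a = −∂H/∂q(q,b,u), ∂H/∂u(q,b,u) = 0}, i.e. with the image of D_H = {(q,p,∂H/∂p(q,p,u), −∂H/∂q(q,p,u))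 : ∂H/∂u(q,p,u) = 0} under the Tulczyjew map α(q,p,q̇,ṗ) = (q,q̇,ṗ,p). -/
/-- Coordinates `(q, p, u)` (resp. tangent directions) for `T*Q ×_Q C`. -/
abbrev XQPU (n k : ℕ) := (Fin n → ℝ) × (Fin n → ℝ) × (Fin k → ℝ)

/-- Coordinates `(q, q̇, a, b)` on `T*TQ` (resp. `(q, p, q̇, ṗ)` on `TT*Q`). -/
abbrev R4n (n : ℕ) := (Fin n → ℝ) × (Fin n → ℝ) × (Fin n → ℝ) × (Fin n → ℝ)

/-- The Pontryagin Hamiltonian `H(q,p,u) = ⟨p, Γ(q,u)⟩ − L(q,u)`. -/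
def pontryaginH {n k : ℕ} (Γ : (Fin n → ℝ) × (Fin k → ℝ) → (Fin n → ℝ))
    (L : (Fin n → ℝ) × (Fin k → ℝ) → ℝ) (x : XQPU n k) : ℝ :=
  dotR x.2.1 (Γ (x.1, x.2.2)) - L (x.1, x.2.2)

/-- The set `ℒ_{C,L} ⊆ T*TQ`: points `(q, q̇, a, b)` such that for some `u`,
`q̇ = Γ(q,u)`, `a + bᵀ ∂Γ/∂q = ∂L/∂q` and `bᵀ ∂Γ/∂u = ∂L/∂u`. -/
def LCL {n k : ℕ} (Γ : (Fin n → ℝ) × (Fin k → ℝ) → (Fin n → ℝ))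
    (L : (Fin n → ℝ) × (Fin k → ℝ) → ℝ) : Set (R4n n) :=
  {y | ∃ u : Fin k → ℝ,
    y.2.1 = Γ (y.1, u) ∧
    (∀ i, y.2.2.1 i + dotR y.2.2.2 (fderiv ℝ Γ (y.1, u) (Pi.single i 1, 0)) =
      fderiv ℝ L (y.1, u) (Pi.single i 1, 0)) ∧
    (∀ c, dotR y.2.2.2 (fderiv ℝ Γ (y.1, u) (0, Pi.single c 1)) =
      fderiv ℝ L (y.1, u) (0, Pi.single c 1))}

/-- The set `D_H ⊆ TT*Q`: points `(q, p, ∂H/∂p, −∂H/∂q)` with `∂H/∂u = 0`. -/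
def DH {n k : ℕ} (Γ : (Fin n → ℝ) × (Fin k → ℝ) → (Fin n → ℝ))
    (L : (Fin n → ℝ) × (Fin k → ℝ) → ℝ) : Set (R4n n) :=
  {d | ∃ u : Fin k → ℝ,
    (∀ i, d.2.2.1 i = fderiv ℝ (pontryaginH Γ L) (d.1, d.2.1, u) (0, Pi.single i 1, 0)) ∧
    (∀ i, d.2.2.2 i = -fderiv ℝ (pontryaginH Γ L) (d.1, d.2.1, u) (Pi.single i 1, 0, 0)) ∧
    (∀ c, fderiv ℝ (pontryaginH Γ L) (d.1, d.2.1, u) (0, 0, Pi.single c 1) = 0)}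

/-- The local expression of the Tulczyjew map `α(q,p,q̇,ṗ) = (q,q̇,ṗ,p)`. -/
def alphaMap {n : ℕ} (x : R4n n) : R4n n := (x.1, x.2.2.1, x.2.2.2, x.2.1)

theorem fderiv_pontryaginH_apply {n k : ℕ}
    (Γ : (Fin n → ℝ) × (Fin k → ℝ) → (Fin n → ℝ))
    (L : (Fin n → ℝ) × (Fin k → ℝ) → ℝ)
    (hΓ : Differentiable ℝ Γ) (hL : Differentiable ℝ L)
    (q b v w : Fin n → ℝ) (u z : Fin k → ℝ) :
    fderiv ℝ (pontryaginH Γ L) (q, b, u) (v, w, z) =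
      dotR b (fderiv ℝ Γ (q, u) (v, z)) + dotR w (Γ (q, u)) - fderiv ℝ L (q, u) (v, z) := by
  let π : XQPU n k →L[ℝ] (Fin n → ℝ) × (Fin k → ℝ) :=
    (ContinuousLinearMap.fst ℝ _ _).prod
      ((ContinuousLinearMap.snd ℝ _ _).comp (ContinuousLinearMap.snd ℝ _ _))
  let ρ : XQPU n k →L[ℝ] (Fin n → ℝ) :=
    (ContinuousLinearMap.fst ℝ _ _).comp (ContinuousLinearMap.snd ℝ _ _)
  have hπ : HasFDerivAt (fun x : XQPU n k => π x) π (q, b, u) := π.hasFDerivAt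
  have hρ : HasFDerivAt (fun x : XQPU n k => ρ x) ρ (q, b, u) := ρ.hasFDerivAt
  have h1 : HasFDerivAt (fun x : XQPU n k => Γ (π x)) ((fderiv ℝ Γ (q, u)).comp π) (q, b, u) :=
    HasFDerivAt.comp (g := Γ) (q, b, u) (hΓ (q, u)).hasFDerivAt hπ
  have h2 : HasFDerivAt (fun x : XQPU n k => L (π x)) ((fderiv ℝ L (q, u)).comp π) (q, b, u) :=
    HasFDerivAt.comp (g := L) (q, b, u) (hL (q, u)).hasFDerivAt hπ
  have h3 := (HasFDerivAt.fun_sum (u := Finset.univ) (fun i _ =>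
    ((hasFDerivAt_pi'.1 hρ i).mul (hasFDerivAt_pi'.1 h1 i)))).sub h2
  have h4 : HasFDerivAt (pontryaginH Γ L) _ (q, b, u) := h3
  rw [h4.fderiv]
  simp [dotR, π, ρ, Finset.sum_add_distrib, mul_comm]

/-- the defining equations of `ℒ_{C,L}` at `(q,u)` with covectors
`a,b` hold iff `a = −∂H/∂q(q,b,u)` and `∂H/∂u(q,b,u) = 0`; moreover
`∂H/∂p(q,b,u) = Γ(q,u)`; consequently `ℒ_{C,L} = α(D_H)`. -/
theorem lagrangian_ocp_eq_tulczyjew_image {n k : ℕ}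
    (Γ : (Fin n → ℝ) × (Fin k → ℝ) → (Fin n → ℝ))
    (L : (Fin n → ℝ) × (Fin k → ℝ) → ℝ)
    (hΓ : Differentiable ℝ Γ) (hL : Differentiable ℝ L) :
    (∀ (q a b : Fin n → ℝ) (u : Fin k → ℝ),
      ((∀ i, a i + dotR b (fderiv ℝ Γ (q, u) (Pi.single i 1, 0)) =
          fderiv ℝ L (q, u) (Pi.single i 1, 0)) ∧
        (∀ c, dotR b (fderiv ℝ Γ (q, u) (0, Pi.single c 1)) =
          fderiv ℝ L (q, u) (0, Pi.single c 1))) ↔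
      ((∀ i, a i = -fderiv ℝ (pontryaginH Γ L) (q, b, u) (Pi.single i 1, 0, 0)) ∧
        (∀ c, fderiv ℝ (pontryaginH Γ L) (q, b, u) (0, 0, Pi.single c 1) = 0))) ∧
    (∀ (q b : Fin n → ℝ) (u : Fin k → ℝ) (i : Fin n),
      fderiv ℝ (pontryaginH Γ L) (q, b, u) (0, Pi.single i 1, 0) = Γ (q, u) i) ∧
    LCL Γ L = alphaMap '' DH Γ L := by
  have key := fderiv_pontryaginH_apply Γ L hΓ hL
  have z : ∀ x : Fin n → ℝ, dotR 0 x = 0 := fun x => by simp [dotR]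
  have z' : ∀ x : Fin n → ℝ, dotR x 0 = 0 := fun x => by simp [dotR]
  have A : ∀ (q a b : Fin n → ℝ) (u : Fin k → ℝ),
      ((∀ i, a i + dotR b (fderiv ℝ Γ (q, u) (Pi.single i 1, 0)) =
          fderiv ℝ L (q, u) (Pi.single i 1, 0)) ∧
        (∀ c, dotR b (fderiv ℝ Γ (q, u) (0, Pi.single c 1)) =
          fderiv ℝ L (q, u) (0, Pi.single c 1))) ↔
      ((∀ i, a i = -fderiv ℝ (pontryaginH Γ L) (q, b, u) (Pi.single i 1, 0, 0)) ∧
        (∀ c, fderiv ℝ (pontryaginH Γ L) (q, b, u) (0, 0, Pi.single c 1) = 0)) := by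
    intro q a b u
    simp only [key, z, add_zero]
    refine and_congr (forall_congr' fun i => ?_) (forall_congr' fun c => ?_)
    · constructor <;> intro h <;> linarith
    · exact sub_eq_zero.symm
  have B : ∀ (q b : Fin n → ℝ) (u : Fin k → ℝ) (i : Fin n),
      fderiv ℝ (pontryaginH Γ L) (q, b, u) (0, Pi.single i 1, 0) = Γ (q, u) i := by
    intro q b u i
    have h0 : ((0 : Fin n → ℝ), (0 : Fin k → ℝ)) = 0 := rfl
    rw [key, h0, map_zero, map_zero, z']
    simp [dotR, Pi.single_apply]
  refine ⟨A, B, ?_⟩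
  ext ⟨q, v, a, b⟩
  constructor
  · rintro ⟨u, h1, h2⟩
    have h3 := (A q a b u).1 h2
    exact ⟨(q, b, v, a), ⟨u, fun i => (congrFun h1 i).trans (B q b u i).symm, h3⟩, rfl⟩
  · rintro ⟨⟨q', b', v', a'⟩, ⟨u, h1, h2⟩, h⟩
    simp only [alphaMap, Prod.mk.injEq] at h
    obtain ⟨rfl, rfl, rfl, rfl⟩ := h
    exact ⟨u, funext fun i => (h1 i).trans (B _ _ u i), (A _ _ _ u).2 h2⟩
end
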